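/- A strongly √J-clean ring R is a local ring if and only if R has no idempotents other than 0 and 1. -/

import Mathlib

/-- `√J(R)`: the set of elements some positive power of which lies in the
Jacobson radical `J(R)` of the ring `R`. -/
def sqrtJ (R : Type*) [Ring R] : Set R :=
  {z : R | ∃ n : ℕ, 1 ≤ n ∧ z ^ n ∈ (⊥ : TwoSidedIdeal R).jacobson}

/-- `R` is a `√J`-clean ring: every element is the sum of an idempotent and an
element of `√J(R)`. -/
def IsSqrtJCleanRing (R : Type*) [Ring R] : Prop :=
  ∀ a : R, ∃ e z : R, IsIdempotentElem e ∧ z ∈ sqrtJ R ∧ a = e + z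

/-- `R` is a strongly `√J`-clean ring: every element is the sum of an idempotent
and an element of `√J(R)` that commute with each other. -/
def IsStronglySqrtJCleanRing (R : Type*) [Ring R] : Prop :=
  ∀ a : R, ∃ e z : R, IsIdempotentElem e ∧ z ∈ sqrtJ R ∧ a = e + z ∧ e * z = z * e

/-- `R` is a uniquely `√J`-clean ring: every element is uniquely the sum of an
idempotent and an element of `√J(R)`. -/
def IsUniquelySqrtJCleanRing (R : Type*) [Ring R] : Prop :=
  ∀ a : R, ∃! p : R × R, IsIdempotentElem p.1 ∧ p.2 ∈ sqrtJ R ∧ a = p.1 + p.2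

/-- `R` is a uniquely clean ring: every element is uniquely the sum of an
idempotent and a unit. -/
def IsUniquelyCleanRing (R : Type*) [Ring R] : Prop :=
  ∀ a : R, ∃! p : R × R, IsIdempotentElem p.1 ∧ IsUnit p.2 ∧ a = p.1 + p.2

/-! In a local ring `e` or `1 - e` is a unit, and the only idempotent unit is `1`. Conversely, in a
ring with only trivial idempotents, a `√J`-clean decomposition of `a` is `a = z` or `a = 1 + z` with
`z ∈ √J(R)`. If `z ^ n ∈ J(R)`, then `1 - z ^ n` is a unit, and `1 - z` divides it with a commuting
cofactor, so `1 - z` is a unit; the same holds for `1 + z`, as `-z ∈ √J(R)`. Hence `1 - a` or `a`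
is a unit. -/

section Ring

variable {R : Type*} [Ring R]

theorem isUnit_of_sub_one_mem_jacobson_bot {r : R} (hr : r - 1 ∈ (⊥ : Ideal R).jacobson) :
    IsUnit r := by
  have exists_left_inv {x : R} (hx : x - 1 ∈ (⊥ : Ideal R).jacobson) : ∃ y, y * x = 1 := by
    simpa [sub_eq_zero] using Ideal.exists_mul_sub_mem_of_sub_one_mem_jacobson x hx
  obtain ⟨s, hsr⟩ := exists_left_inv hr
  -- The left inverse `s` is again congruent to `1`, so it has a left inverse of its own.
  have hs : s - 1 ∈ (⊥ : Ideal R).jacobson := by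
    have : s - 1 = -s * (r - 1) := by rw [mul_sub, neg_mul, hsr]; noncomm_ring
    exact this ▸ Ideal.mul_mem_left _ _ hr
  obtain ⟨t, hts⟩ := exists_left_inv hs
  obtain rfl : t = r := left_inv_eq_right_inv hts hsr
  exact ⟨⟨t, s, hts, hsr⟩, rfl⟩

theorem isUnit_one_sub_of_isUnit_one_sub_pow {z : R} {n : ℕ} (h : IsUnit (1 - z ^ n)) :
    IsUnit (1 - z) := by
  have hcomm : Commute (1 - z) (∑ i ∈ Finset.range n, z ^ i) :=
    (mul_neg_geom_sum z n).trans (geom_sum_mul_neg z n).symm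
  rw [← mul_neg_geom_sum, hcomm.isUnit_mul_iff] at h
  exact h.1

theorem eq_zero_or_eq_one_of_isIdempotentElem [IsLocalRing R] {e : R} (he : IsIdempotentElem e) :
    e = 0 ∨ e = 1 := by
  rcases IsLocalRing.isUnit_or_isUnit_of_add_one (sub_add_cancel 1 e) with hu | hu
  · exact .inl (sub_eq_self.mp <| (IsIdempotentElem.iff_eq_one_of_isUnit hu).mp he.one_sub)
  · exact .inr ((IsIdempotentElem.iff_eq_one_of_isUnit hu).mp he)

theorem neg_mem_sqrtJ {z : R} (hz : z ∈ sqrtJ R) : -z ∈ sqrtJ R := by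
  obtain ⟨n, hn, hzn⟩ := hz
  exact ⟨n, hn, neg_pow z n ▸ TwoSidedIdeal.mul_mem_left _ _ _ hzn⟩

theorem isUnit_one_sub_of_mem_sqrtJ {z : R} (hz : z ∈ sqrtJ R) : IsUnit (1 - z) := by
  obtain ⟨n, -, hzn⟩ := hz
  have hmem : (1 - z ^ n) - 1 ∈ (⊥ : Ideal R).jacobson := by
    simpa [TwoSidedIdeal.jacobson] using hzn
  exact isUnit_one_sub_of_isUnit_one_sub_pow (isUnit_of_sub_one_mem_jacobson_bot hmem)

theorem isUnit_one_add_of_mem_sqrtJ {z : R} (hz : z ∈ sqrtJ R) : IsUnit (1 + z) :=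
  sub_neg_eq_add 1 z ▸ isUnit_one_sub_of_mem_sqrtJ (neg_mem_sqrtJ hz)

end Ring

theorem IsStronglySqrtJCleanRing.isSqrtJCleanRing {R : Type*} [Ring R]
    (h : IsStronglySqrtJCleanRing R) : IsSqrtJCleanRing R := fun a ↦
  let ⟨e, z, he, hz, hae, _⟩ := h a
  ⟨e, z, he, hz, hae⟩

theorem stronglySqrtJClean_local_iff_general (R : Type*) [Ring R] [Nontrivial R]
    (h : IsSqrtJCleanRing R) :
    IsLocalRing R ↔ ∀ e : R, IsIdempotentElem e → e = 0 ∨ e = 1 := by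
  refine ⟨fun _ _ he ↦ eq_zero_or_eq_one_of_isIdempotentElem he, fun hidem ↦
    .of_isUnit_or_isUnit_one_sub_self fun a ↦ ?_⟩
  obtain ⟨e, z, he, hz, rfl⟩ := h a
  rcases hidem e he with rfl | rfl
  · exact .inr (by simpa only [zero_add] using isUnit_one_sub_of_mem_sqrtJ hz)
  · exact .inl (isUnit_one_add_of_mem_sqrtJ hz)

theorem stronglySqrtJClean_local_iff (R : Type*) [Ring R] [Nontrivial R]
    (h : IsStronglySqrtJCleanRing R) :
    IsLocalRing R ↔ ∀ e : R, IsIdempotentElem e → e = 0 ∨ e = 1 :=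
  stronglySqrtJClean_local_iff_general R h.isSqrtJCleanRing
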